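/- Let I be a graded-nil two-sided homogeneous ideal of a G-graded ring R. Then R is graded NR-clean if and only if R/I is graded NR-clean. -/

import Mathlib

/-- An element is homogeneous w.r.t. a grading family `𝒜` if it lies in some component. -/
def Homogeneous {G : Type*} [Group G] {R : Type*} [Ring R]
    (𝒜 : G → AddSubgroup R) (x : R) : Prop := ∃ g, x ∈ 𝒜 g

/-- A graded-regular element: homogeneous `r` with `r = r * a * r` for some homogeneous `a`. -/
def GradedRegular {G : Type*} [Group G] {R : Type*} [Ring R]
    (𝒜 : G → AddSubgroup R) (r : R) : Prop :=
  Homogeneous 𝒜 r ∧ ∃ a : R, Homogeneous 𝒜 a ∧ r = r * a * r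

/-- Graded NR-clean: every homogeneous element is a sum of a graded-regular element
and a homogeneous nilpotent element. -/
def GradedNRClean {G : Type*} [Group G] {R : Type*} [Ring R]
    (𝒜 : G → AddSubgroup R) : Prop :=
  ∀ x : R, Homogeneous 𝒜 x →
    ∃ r n : R, GradedRegular 𝒜 r ∧ Homogeneous 𝒜 n ∧ IsNilpotent n ∧ x = r + n

/-- `𝒜` is a `G`-grading of the ring `R`. -/
structure IsGrading {G : Type*} [Group G] [DecidableEq G] {R : Type*} [Ring R]
    (𝒜 : G → AddSubgroup R) : Prop where
  one_mem : (1 : R) ∈ 𝒜 1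
  mul_mem : ∀ {g h : G} {a b : R}, a ∈ 𝒜 g → b ∈ 𝒜 h → a * b ∈ 𝒜 (g * h)
  isInternal : DirectSum.IsInternal 𝒜

/-!
Write `φ : R → R/I`. Since `I` is homogeneous, comparing degree `g` components shows that in a
decomposition `φ x = φ r + φ n` of an element of degree `g` both summands may be taken in degree
`g`, and that a homogeneous `a` with `φ r = φ (r * a * r)` may be taken in degree `g⁻¹`. Then
`r * a` has degree `1` and is idempotent modulo `I`, so it lifts to an idempotent `f` of degree `1`.
The element `f * r` is a graded-regular lift of `φ r`, and `x - f * r`, being nilpotent modulo `I`,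
is nilpotent.
-/

open DirectSum

theorem pred_decompose_of_mem {ι M σ : Type*} [DecidableEq ι] [AddCommMonoid M] [SetLike σ M]
    [AddSubmonoidClass σ M] (ℳ : ι → σ) [Decomposition ℳ] {p : M → Prop} {x : M} {i : ι}
    (hx : x ∈ ℳ i) (zero : p 0) (self : p x) (j : ι) : p (decompose ℳ x j) := by
  obtain rfl | hij := eq_or_ne i j
  · rwa [decompose_of_mem_same ℳ hx]
  · rwa [decompose_of_mem_ne ℳ hx hij]

theorem map_decompose_eq_of_isHomogeneous_ker {ι σ R T : Type*} [DecidableEq ι] [Ring R] [Ring T]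
    [SetLike σ R] [AddSubgroupClass σ R] {𝒜 : ι → σ} [Decomposition 𝒜] {φ : R →+* T}
    (hφ : SetLike.IsHomogeneous 𝒜 (RingHom.ker φ)) {x y : R} (hxy : φ x = φ y) (i : ι) :
    φ (decompose 𝒜 x i) = φ (decompose 𝒜 y i) := by
  have hmem : x - y ∈ RingHom.ker φ := by rw [RingHom.mem_ker, map_sub, hxy, sub_self]
  simpa [RingHom.mem_ker, decompose_sub, sub_eq_zero] using hφ i hmem

theorem exists_isIdempotentElem_mul_mul_eq_of_ker_isNilpotent {S T : Type*} [Ring S] [Ring T]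
    {φ : S →+* T} (hφ : ∀ x ∈ RingHom.ker φ, IsNilpotent x) {e : S}
    (he : IsIdempotentElem (φ e)) :
    ∃ f u : S, IsIdempotentElem f ∧ φ f = φ e ∧ f * e * u = f := by
  obtain ⟨f, hf, hfe⟩ := exists_isIdempotentElem_eq_of_ker_isNilpotent φ hφ (φ e) ⟨e, rfl⟩ he
  have hnil : IsNilpotent (f - e) := hφ _ (by rw [RingHom.mem_ker, map_sub, hfe, sub_self])
  obtain ⟨u, hu⟩ := hnil.isUnit_one_sub.exists_right_inv
  have hfu : f * e = f * (1 - (f - e)) := by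
    rw [mul_sub, mul_sub, mul_one, hf.eq, sub_sub_cancel]
  exact ⟨f, u, hf, hfe, by rw [hfu, mul_assoc, hu, mul_one]⟩

section Map

variable {G : Type*} [Group G] {R T : Type*} [Ring R] [Ring T] {𝒜 : G → AddSubgroup R}

theorem GradedRegular.map {r : R} (hr : GradedRegular 𝒜 r) (φ : R →+* T) :
    GradedRegular (fun g ↦ (𝒜 g).map φ.toAddMonoidHom) (φ r) := by
  obtain ⟨⟨g, hr⟩, a, ⟨h, ha⟩, hra⟩ := hr
  exact ⟨⟨g, r, hr, rfl⟩, φ a, ⟨h, a, ha, rfl⟩, by rw [← map_mul, ← map_mul, ← hra]⟩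

theorem GradedNRClean.map (h𝒜 : GradedNRClean 𝒜) (φ : R →+* T) :
    GradedNRClean (fun g ↦ (𝒜 g).map φ.toAddMonoidHom) := by
  rintro _ ⟨g, x, hx, rfl⟩
  obtain ⟨r, n, hr, ⟨k, hn⟩, hn_nil, rfl⟩ := h𝒜 x ⟨g, hx⟩
  exact ⟨φ r, φ n, hr.map φ, ⟨k, n, hn, rfl⟩, hn_nil.map φ, map_add φ r n⟩

end Map

namespace IsGrading

variable {G : Type*} [Group G] [DecidableEq G] {R : Type*} [Ring R] {𝒜 : G → AddSubgroup R}

theorem homogeneous_mul (hG : IsGrading 𝒜) {x y : R} (hx : Homogeneous 𝒜 x)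
    (hy : Homogeneous 𝒜 y) : Homogeneous 𝒜 (x * y) := by
  obtain ⟨g, hx⟩ := hx
  obtain ⟨h, hy⟩ := hy
  exact ⟨g * h, hG.mul_mem hx hy⟩

theorem homogeneous_pow (hG : IsGrading 𝒜) {x : R} (hx : Homogeneous 𝒜 x) (n : ℕ) :
    Homogeneous 𝒜 (x ^ n) := by
  induction n with
  | zero => exact ⟨1, by simpa only [pow_zero] using hG.one_mem⟩
  | succ n ih => simpa only [pow_succ] using hG.homogeneous_mul ih hx

/-- The subring of elements of degree `1`, in which idempotents are lifted. -/
def degreeOne (hG : IsGrading 𝒜) : Subring R where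
  __ := 𝒜 1
  one_mem' := hG.one_mem
  mul_mem' hx hy := mul_one (1 : G) ▸ hG.mul_mem hx hy

theorem mul_mem_one_of_mem_inv (hG : IsGrading 𝒜) {g : G} {x y : R} (hx : x ∈ 𝒜 g)
    (hy : y ∈ 𝒜 g⁻¹) : x * y ∈ 𝒜 1 :=
  mul_inv_cancel g ▸ hG.mul_mem hx hy

section Hom

variable {T : Type*} [Ring T] {φ : R →+* T}

theorem isNilpotent_of_isNilpotent_map (hG : IsGrading 𝒜)
    (hnil : ∀ x ∈ RingHom.ker φ, Homogeneous 𝒜 x → IsNilpotent x) {x : R}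
    (hx : Homogeneous 𝒜 x) (hφx : IsNilpotent (φ x)) : IsNilpotent x := by
  obtain ⟨n, hn⟩ := hφx
  have hmem : x ^ n ∈ RingHom.ker φ := by rw [RingHom.mem_ker, map_pow, hn]
  exact (hnil _ hmem (hG.homogeneous_pow hx n)).of_pow

theorem exists_gradedRegular_map_eq_of_mem_inv (hG : IsGrading 𝒜)
    (hnil : ∀ x ∈ RingHom.ker φ, Homogeneous 𝒜 x → IsNilpotent x)
    {g : G} {r b : R} (hr : r ∈ 𝒜 g) (hb : b ∈ 𝒜 g⁻¹) (hrb : φ r = φ (r * b * r)) :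
    ∃ r' ∈ 𝒜 g, GradedRegular 𝒜 r' ∧ φ r' = φ r := by
  let e : hG.degreeOne := ⟨r * b, hG.mul_mem_one_of_mem_inv hr hb⟩
  have hker : ∀ x ∈ RingHom.ker (φ.comp hG.degreeOne.subtype), IsNilpotent x := fun x hx ↦
    (IsNilpotent.map_iff hG.degreeOne.subtype_injective).1 <| hnil x hx ⟨1, x.2⟩
  have he : IsIdempotentElem (φ (r * b)) := by
    rw [IsIdempotentElem, ← map_mul, ← mul_assoc, map_mul, ← hrb, ← map_mul]
  obtain ⟨f, u, hf, hfe, hfu⟩ :=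
    exists_isIdempotentElem_mul_mul_eq_of_ker_isNilpotent hker (e := e) he
  have hf' : (f * f : R) = f := congrArg Subtype.val hf.eq
  have hfu' : (f * (r * b) * u : R) = f := congrArg Subtype.val hfu
  have hfr : (f * r : R) ∈ 𝒜 g := one_mul g ▸ hG.mul_mem f.2 hr
  have hbu : (b * u : R) ∈ 𝒜 g⁻¹ := mul_one g⁻¹ ▸ hG.mul_mem hb u.2
  refine ⟨f * r, hfr, ⟨⟨g, hfr⟩, b * u, ⟨g⁻¹, hbu⟩, ?_⟩, ?_⟩
  · calc (f * r : R) = f * (r * b) * u * f * r := by rw [hfu', hf']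
      _ = f * r * (b * u) * (f * r) := by simp only [mul_assoc]
  · calc φ (f * r) = φ (r * b) * φ r := by rw [map_mul]; exact congrArg (· * φ r) hfe
      _ = φ r := by rw [← map_mul, ← hrb]

end Hom

section Decomposition

variable [Decomposition 𝒜]

theorem isHomogeneous_span (hG : IsGrading 𝒜) {S : Set R} (hS : ∀ s ∈ S, Homogeneous 𝒜 s) :
    SetLike.IsHomogeneous 𝒜 (TwoSidedIdeal.span S) := by
  have component_mem {s : R} (hs : s ∈ S) (a b : R) (g : G) :
      (decompose 𝒜 (a * s * b) g : R) ∈ TwoSidedIdeal.span S := by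
    induction a using Decomposition.inductionOn 𝒜 with
    | zero => simp [zero_mem]
    | add a a' ha ha' => simpa [add_mul] using add_mem ha ha'
    | homogeneous a =>
      induction b using Decomposition.inductionOn 𝒜 with
      | zero => simp [zero_mem]
      | add b b' hb hb' => simpa [mul_add] using add_mem hb hb'
      | homogeneous b =>
        obtain ⟨h, hasb⟩ : Homogeneous 𝒜 (a * s * b : R) :=
          hG.homogeneous_mul (hG.homogeneous_mul ⟨_, a.2⟩ (hS s hs)) ⟨_, b.2⟩
        have hmem : (a * s * b : R) ∈ TwoSidedIdeal.span S :=
          TwoSidedIdeal.mul_mem_right _ _ _ <|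
            TwoSidedIdeal.mul_mem_left _ _ _ <| TwoSidedIdeal.subset_span hs
        exact pred_decompose_of_mem 𝒜 hasb (zero_mem _) hmem g
  intro g x hx
  rw [TwoSidedIdeal.mem_span_iff_mem_addSubgroup_closure] at hx
  induction hx using AddSubgroup.closure_induction with
  | zero => simp [zero_mem]
  | add x y _ _ hx hy => simpa using add_mem hx hy
  | neg x _ hx =>
    rw [decompose_neg]
    exact neg_mem hx
  | mem x hx =>
    obtain ⟨_, ⟨a, -, s, hs, rfl⟩, b, -, rfl⟩ := hx
    exact component_mem hs a b g

variable {T : Type*} [Ring T] {φ : R →+* T}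

theorem exists_mem_inv_map_eq (hG : IsGrading 𝒜) (hφ : SetLike.IsHomogeneous 𝒜 (RingHom.ker φ))
    {g : G} {r a : R} (hr : r ∈ 𝒜 g) (ha : Homogeneous 𝒜 a) (hra : φ r = φ (r * a * r)) :
    ∃ b ∈ 𝒜 g⁻¹, φ r = φ (r * b * r) := by
  obtain ⟨h, ha⟩ := ha
  obtain rfl | hne := eq_or_ne h g⁻¹
  · exact ⟨a, ha, hra⟩
  have hdeg : g * h * g ≠ g := fun heq ↦
    hne (inv_eq_of_mul_eq_one_right (mul_eq_right.1 heq)).symm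
  have hr0 : φ r = 0 := by
    have hcomp := map_decompose_eq_of_isHomogeneous_ker hφ hra g
    rwa [decompose_of_mem_same 𝒜 hr,
      decompose_of_mem_ne 𝒜 (hG.mul_mem (hG.mul_mem hr ha) hr) hdeg, map_zero] at hcomp
  exact ⟨0, zero_mem _, by rw [hr0, mul_zero, zero_mul, map_zero]⟩

theorem exists_gradedRegular_map_eq (hG : IsGrading 𝒜)
    (hφ : SetLike.IsHomogeneous 𝒜 (RingHom.ker φ))
    (hnil : ∀ x ∈ RingHom.ker φ, Homogeneous 𝒜 x → IsNilpotent x)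
    {g : G} {r a : R} (hr : r ∈ 𝒜 g) (ha : Homogeneous 𝒜 a) (hra : φ r = φ (r * a * r)) :
    ∃ r' ∈ 𝒜 g, GradedRegular 𝒜 r' ∧ φ r' = φ r := by
  obtain ⟨b, hb, hrb⟩ := hG.exists_mem_inv_map_eq hφ hr ha hra
  exact hG.exists_gradedRegular_map_eq_of_mem_inv hnil hr hb hrb

theorem gradedNRClean_of_map (hG : IsGrading 𝒜) (hφ : SetLike.IsHomogeneous 𝒜 (RingHom.ker φ))
    (hnil : ∀ x ∈ RingHom.ker φ, Homogeneous 𝒜 x → IsNilpotent x)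
    (hmap : GradedNRClean (fun g ↦ (𝒜 g).map φ.toAddMonoidHom)) : GradedNRClean 𝒜 := by
  rintro x ⟨g, hx⟩
  obtain ⟨_, _, ⟨⟨h, r, hr, rfl⟩, _, ⟨m, a, ha, rfl⟩, hra⟩, ⟨k, n, hn, rfl⟩, hn_nil, hxrn⟩ :=
    hmap (φ x) ⟨g, x, hx, rfl⟩
  let r₀ : R := decompose 𝒜 r g
  let n₀ : R := decompose 𝒜 n g
  have hx₀ : φ x = φ r₀ + φ n₀ := by
    have hcomp := map_decompose_eq_of_isHomogeneous_ker hφ (hxrn.trans (map_add φ r n).symm) g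
    rwa [decompose_of_mem_same 𝒜 hx, decompose_add, DirectSum.add_apply, AddSubgroup.coe_add,
      map_add] at hcomp
  have hr₀ : φ r₀ = φ (r₀ * a * r₀) :=
    pred_decompose_of_mem 𝒜 (p := fun y ↦ φ y = φ (y * a * y)) hr (by rw [mul_zero])
      (by rw [map_mul, map_mul]; exact hra) g
  have hn₀ : IsNilpotent (φ n₀) :=
    pred_decompose_of_mem 𝒜 (p := fun y ↦ IsNilpotent (φ y)) hn (by rw [map_zero]; exact .zero)
      hn_nil g
  obtain ⟨r', hr', hr'_reg, hr'r₀⟩ :=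
    hG.exists_gradedRegular_map_eq hφ hnil (decompose 𝒜 r g).2 ⟨m, ha⟩ hr₀
  have hdiff : φ (x - r') = φ n₀ := by rw [map_sub, hr'r₀, hx₀, add_sub_cancel_left]
  have hdiff_hom : Homogeneous 𝒜 (x - r') := ⟨g, sub_mem hx hr'⟩
  exact ⟨r', x - r', hr'_reg, hdiff_hom,
    hG.isNilpotent_of_isNilpotent_map hnil hdiff_hom (hdiff ▸ hn₀),
    (add_sub_cancel r' x).symm⟩

end Decomposition

end IsGrading

/-- For a graded-nil homogeneous two-sided ideal `I`, the ring `R` is graded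
NR-clean iff `R/I` (with the induced grading by the images of the components) is
graded NR-clean. -/
theorem stmt7 {G : Type*} [Group G] [DecidableEq G] {R : Type*} [Ring R]
    (𝒜 : G → AddSubgroup R) (hG : IsGrading 𝒜) (I : TwoSidedIdeal R)
    (hIhom : ∃ S : Set R, (∀ s ∈ S, Homogeneous 𝒜 s) ∧ I = TwoSidedIdeal.span S)
    (hnil : ∀ a ∈ I, Homogeneous 𝒜 a → IsNilpotent a) :
    GradedNRClean 𝒜 ↔
      GradedNRClean (fun g => (𝒜 g).map (I.ringCon.mk' : R →+* _).toAddMonoidHom) := by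
  let _ : Decomposition 𝒜 := hG.isInternal.chooseDecomposition
  obtain ⟨S, hS, rfl⟩ := hIhom
  set I := TwoSidedIdeal.span S
  have hker (x : R) : x ∈ RingHom.ker I.ringCon.mk' ↔ x ∈ I := by
    rw [RingHom.mem_ker, ← TwoSidedIdeal.mem_ker, TwoSidedIdeal.ker_ringCon_mk']
  have hhom : SetLike.IsHomogeneous 𝒜 (RingHom.ker I.ringCon.mk') := fun g x hx ↦
    (hker _).2 (hG.isHomogeneous_span hS g ((hker x).1 hx))
  exact ⟨fun h𝒜 ↦ h𝒜.map _,
    hG.gradedNRClean_of_map hhom fun x hx ↦ hnil x ((hker x).1 hx)⟩
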